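/- Consider a mixed instance on a star graph (one center agent adjacent to all other agents, the satellites, with no edges between satellites) in which no edge is a chore for its satellite endpoint agent. Then the orientation that allocates every edge to its satellite endpoint is EFX^0_0 (and hence EFX^0_-). -/

import Mathlib

open Finset

variable {V : Type*} [DecidableEq V]

/-- `e` has strictly positive marginal value (is a *good*) for the valuation `v`
relative to the item set `M`. -/
def IsGoodFor (v : Finset (Sym2 V) → ℝ) (M : Finset (Sym2 V)) (e : Sym2 V) : Prop :=
  ∀ S ⊆ M.erase e, v S < v (insert e S)

/-- `e` has strictly negative marginal value (is a *chore*) for the valuation `v`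
relative to the item set `M`. -/
def IsChoreFor (v : Finset (Sym2 V) → ℝ) (M : Finset (Sym2 V)) (e : Sym2 V) : Prop :=
  ∀ S ⊆ M.erase e, v (insert e S) < v S

/-- `e` has zero marginal value (is a *dummy*) for the valuation `v`
relative to the item set `M`. -/
def IsDummyFor (v : Finset (Sym2 V) → ℝ) (M : Finset (Sym2 V)) (e : Sym2 V) : Prop :=
  ∀ S ⊆ M.erase e, v (insert e S) = v S

/-- A valid instance on a simple graph: the edge set `M` consists of non-loop edges,
every edge is (for every agent) a good, a chore, or a dummy, and every edge not
incident to an agent is a dummy for that agent. -/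
def ValidInstance (M : Finset (Sym2 V)) (v : V → Finset (Sym2 V) → ℝ) : Prop :=
  (∀ e ∈ M, ¬ e.IsDiag) ∧
  (∀ (i : V), ∀ e ∈ M, IsGoodFor (v i) M e ∨ IsChoreFor (v i) M e ∨ IsDummyFor (v i) M e) ∧
  (∀ (i : V), ∀ e ∈ M, i ∉ e → IsDummyFor (v i) M e)

/-- `X` is a (complete) allocation of the items in `M`: bundles are contained in `M`
and every item belongs to exactly one bundle. -/
def IsAllocation (M : Finset (Sym2 V)) (X : V → Finset (Sym2 V)) : Prop :=
  (∀ i, X i ⊆ M) ∧ ∀ e ∈ M, ∃! i, e ∈ X i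

/-- Every allocated edge goes to one of its endpoint agents. -/
def IsOrientation (X : V → Finset (Sym2 V)) : Prop :=
  ∀ i, ∀ e ∈ X i, i ∈ e

/-- Agent `i` envies agent `j`. -/
def Envies (v : V → Finset (Sym2 V) → ℝ) (X : V → Finset (Sym2 V)) (i j : V) : Prop :=
  v i (X i) < v i (X j)

/-- EFX condition on the envied bundle, removing an item whose removal *strictly*
decreases the value (superscript `+`). -/
def CondEnviedStrict (v : V → Finset (Sym2 V) → ℝ) (X : V → Finset (Sym2 V)) : Prop :=
  ∀ i j, Envies v X i j → ∀ e ∈ X j,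
    v i ((X j).erase e) < v i (X j) → v i ((X j).erase e) ≤ v i (X i)

/-- EFX condition on the envied bundle, removing an item whose removal weakly
decreases the value (superscript `0`). -/
def CondEnviedWeak (v : V → Finset (Sym2 V) → ℝ) (X : V → Finset (Sym2 V)) : Prop :=
  ∀ i j, Envies v X i j → ∀ e ∈ X j,
    v i ((X j).erase e) ≤ v i (X j) → v i ((X j).erase e) ≤ v i (X i)

/-- EFX condition on the envious agent's own bundle, removing an item whose removal
*strictly* increases the value (subscript `-`). -/
def CondOwnStrict (v : V → Finset (Sym2 V) → ℝ) (X : V → Finset (Sym2 V)) : Prop :=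
  ∀ i j, Envies v X i j → ∀ e ∈ X i,
    v i (X i) < v i ((X i).erase e) → v i (X j) ≤ v i ((X i).erase e)

/-- EFX condition on the envious agent's own bundle, removing an item whose removal
weakly increases the value (subscript `0`). -/
def CondOwnWeak (v : V → Finset (Sym2 V) → ℝ) (X : V → Finset (Sym2 V)) : Prop :=
  ∀ i j, Envies v X i j → ∀ e ∈ X i,
    v i (X i) ≤ v i ((X i).erase e) → v i (X j) ≤ v i ((X i).erase e)

/-!
A satellite's bundle is empty or a single edge that is not a chore for it, so the satellite values
it at least as much as `∅`; every other bundle is empty or a single edge that is a dummy for it. So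
only the center can be envious. The center's bundle is empty, which leaves nothing to remove from
it, and removing the single edge of an envied bundle leaves `∅`, which is what the center has.
-/

section Marginals

variable {f : Finset (Sym2 V) → ℝ} {M : Finset (Sym2 V)} {e : Sym2 V}

theorem IsGoodFor.empty_lt_singleton (h : IsGoodFor f M e) : f ∅ < f {e} :=
  h ∅ (empty_subset _)

theorem IsDummyFor.singleton_eq_empty (h : IsDummyFor f M e) : f {e} = f ∅ :=
  h ∅ (empty_subset _)

theorem empty_le_singleton_of_not_isChoreFor
    (h : IsGoodFor f M e ∨ IsChoreFor f M e ∨ IsDummyFor f M e) (hchore : ¬ IsChoreFor f M e) :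
    f ∅ ≤ f {e} := by
  rcases h with hgood | hchore' | hdummy
  · exact hgood.empty_lt_singleton.le
  · exact absurd hchore' hchore
  · exact hdummy.singleton_eq_empty.ge

end Marginals

section EFX

variable {v : V → Finset (Sym2 V) → ℝ} {X : V → Finset (Sym2 V)}

theorem CondOwnWeak.condOwnStrict (h : CondOwnWeak v X) : CondOwnStrict v X :=
  fun i j henvy e he hlt => h i j henvy e he hlt.le

theorem condOwnWeak_of_envies_imp_eq_empty (h : ∀ i j, Envies v X i j → X i = ∅) :
    CondOwnWeak v X := by
  intro i j henvy e he
  rw [h i j henvy] at he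
  exact absurd he (notMem_empty e)

theorem condEnviedWeak_of_envies_imp_eq_empty (h : ∀ i j, Envies v X i j → X i = ∅)
    (hcard : ∀ j, #(X j) ≤ 1) : CondEnviedWeak v X := by
  intro i j henvy e he _
  have herase : (X j).erase e = ∅ := by
    rw [← card_eq_zero, card_erase_of_mem he, Nat.sub_eq_zero_of_le (hcard j)]
  rw [herase, h i j henvy]

end EFX

/-- The orientation of a star with center `c` and edge set `M` towards its satellites: each
satellite gets the edges of `M` at it, and the center gets nothing. It is defined for every `c` and
`M`; in general, an edge avoiding `c` goes to both of its endpoints, and a loop at `c` to nobody. -/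
def satelliteOrientation (c : V) (M : Finset (Sym2 V)) (i : V) : Finset (Sym2 V) :=
  if i = c then ∅ else M.filter (fun e => i ∈ e)

namespace satelliteOrientation

variable {c i j : V} {M : Finset (Sym2 V)} {e : Sym2 V}

theorem mem_iff : e ∈ satelliteOrientation c M i ↔ i ≠ c ∧ e ∈ M ∧ i ∈ e := by
  by_cases hi : i = c <;> simp [satelliteOrientation, hi]

theorem center_eq_empty : satelliteOrientation c M c = ∅ :=
  if_pos rfl

theorem isOrientation : IsOrientation (satelliteOrientation c M) :=
  fun _ _ he => (mem_iff.1 he).2.2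

theorem eq_mk_of_mem (hstar : ∀ e ∈ M, c ∈ e) (he : e ∈ satelliteOrientation c M i) :
    e = s(c, i) := by
  obtain ⟨hi, heM, hie⟩ := mem_iff.1 he
  exact (Sym2.mem_and_mem_iff hi.symm).1 ⟨hstar e heM, hie⟩

theorem card_le_one (hstar : ∀ e ∈ M, c ∈ e) : #(satelliteOrientation c M i) ≤ 1 :=
  card_le_one_iff.2 fun he he' => (eq_mk_of_mem hstar he).trans (eq_mk_of_mem hstar he').symm

theorem eq_empty_or_eq_singleton (hstar : ∀ e ∈ M, c ∈ e) :
    satelliteOrientation c M i = ∅ ∨ s(c, i) ∈ M ∧ satelliteOrientation c M i = {s(c, i)} := by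
  rcases (satelliteOrientation c M i).eq_empty_or_nonempty with hempty | ⟨e, he⟩
  · exact Or.inl hempty
  · obtain rfl := eq_mk_of_mem hstar he
    exact Or.inr ⟨(mem_iff.1 he).2.1,
      eq_singleton_iff_unique_mem.2 ⟨he, fun _ => eq_mk_of_mem hstar⟩⟩

theorem isAllocation (hloop : ∀ e ∈ M, ¬ e.IsDiag) (hstar : ∀ e ∈ M, c ∈ e) :
    IsAllocation M (satelliteOrientation c M) := by
  refine ⟨fun i e he => (mem_iff.1 he).2.1, fun e heM => ?_⟩
  obtain ⟨k, rfl⟩ := hstar e heM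
  have hkc : k ≠ c := fun hk => hloop _ heM (Sym2.mk_isDiag_iff.2 hk.symm)
  exact ⟨k, mem_iff.2 ⟨hkc, heM, Sym2.mem_mk_right c k⟩,
    fun i hi => (Sym2.congr_right.1 (eq_mk_of_mem hstar hi)).symm⟩

section Envy

variable {f : Finset (Sym2 V) → ℝ} {v : V → Finset (Sym2 V) → ℝ}

theorem empty_le_own_bundle (hstar : ∀ e ∈ M, c ∈ e) (hown : ∀ e ∈ M, i ∈ e → f ∅ ≤ f {e}) :
    f ∅ ≤ f (satelliteOrientation c M i) := by
  rcases eq_empty_or_eq_singleton (i := i) hstar with h | ⟨hM, h⟩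
  · rw [h]
  · rw [h]
    exact hown _ hM (Sym2.mem_mk_right c i)

theorem other_bundle_le_empty (hstar : ∀ e ∈ M, c ∈ e) (hic : i ≠ c) (hij : i ≠ j)
    (hother : ∀ e ∈ M, i ∉ e → f {e} ≤ f ∅) : f (satelliteOrientation c M j) ≤ f ∅ := by
  rcases eq_empty_or_eq_singleton (i := j) hstar with h | ⟨hM, h⟩
  · rw [h]
  · rw [h]
    exact hother _ hM (by simp [hic, hij])

theorem eq_center_of_envies (hstar : ∀ e ∈ M, c ∈ e)
    (hown : ∀ i ≠ c, ∀ e ∈ M, i ∈ e → v i ∅ ≤ v i {e})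
    (hother : ∀ i ≠ c, ∀ e ∈ M, i ∉ e → v i {e} ≤ v i ∅)
    (henvy : Envies v (satelliteOrientation c M) i j) : i = c := by
  by_contra hic
  have hij : i ≠ j := by
    rintro rfl
    exact lt_irrefl _ henvy
  exact henvy.not_ge <|
    (other_bundle_le_empty hstar hic hij (hother i hic)).trans
      (empty_le_own_bundle hstar (hown i hic))

end Envy

end satelliteOrientation

theorem stmt15_general {c : V} {M : Finset (Sym2 V)} {v : V → Finset (Sym2 V) → ℝ}
    (hloop : ∀ e ∈ M, ¬ e.IsDiag) (hstar : ∀ e ∈ M, c ∈ e)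
    (hown : ∀ i ≠ c, ∀ e ∈ M, i ∈ e → v i ∅ ≤ v i {e})
    (hother : ∀ i ≠ c, ∀ e ∈ M, i ∉ e → v i {e} ≤ v i ∅) :
    IsAllocation M (satelliteOrientation c M) ∧ IsOrientation (satelliteOrientation c M) ∧
      (CondEnviedWeak v (satelliteOrientation c M) ∧ CondOwnWeak v (satelliteOrientation c M)) ∧
      (CondEnviedWeak v (satelliteOrientation c M) ∧
        CondOwnStrict v (satelliteOrientation c M)) := by
  have hempty (i j : V) (henvy : Envies v (satelliteOrientation c M) i j) :
      satelliteOrientation c M i = ∅ := by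
    rw [satelliteOrientation.eq_center_of_envies hstar hown hother henvy,
      satelliteOrientation.center_eq_empty]
  have henvied := condEnviedWeak_of_envies_imp_eq_empty hempty
    fun _ => satelliteOrientation.card_le_one hstar
  have hownWeak := condOwnWeak_of_envies_imp_eq_empty hempty
  exact ⟨satelliteOrientation.isAllocation hloop hstar, satelliteOrientation.isOrientation,
    ⟨henvied, hownWeak⟩, henvied, hownWeak.condOwnStrict⟩

/-- On a star with center `c` in which no edge is a chore for its
satellite endpoint, the orientation allocating every edge to its satellite endpoint is
EFX⁰₀ (and hence EFX⁰₋). -/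
theorem stmt15 {V : Type*} [DecidableEq V]
    (c : V) (M : Finset (Sym2 V)) (v : V → Finset (Sym2 V) → ℝ)
    (hvalid : ValidInstance M v)
    (hstar : ∀ e ∈ M, c ∈ e)
    (hnochore : ∀ e ∈ M, ∀ i ∈ e, i ≠ c → ¬ IsChoreFor (v i) M e)
    (X : V → Finset (Sym2 V))
    (hX : ∀ i, X i = if i = c then ∅ else M.filter (fun e => i ∈ e)) :
    IsAllocation M X ∧ IsOrientation X ∧
      (CondEnviedWeak v X ∧ CondOwnWeak v X) ∧
      (CondEnviedWeak v X ∧ CondOwnStrict v X) := by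
  obtain rfl : X = satelliteOrientation c M := funext hX
  obtain ⟨hloop, htype, hdummy⟩ := hvalid
  exact stmt15_general hloop hstar
    (fun i hic e he hie =>
      empty_le_singleton_of_not_isChoreFor (htype i e he) (hnochore e he i hie hic))
    (fun i _ e he hie => (hdummy i e he hie).singleton_eq_empty.le)
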